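/- arXiv:2306.05498 — 2 statements merged into one kernel-verified Lean document; each statement's English description precedes it below -/
import Mathlib

section
/- Let (Θ, 𝒜, π) be a probability space (the prior over parameters), and let f : Θ × ℝ → [0,∞) be jointly measurable such that for every θ ∈ Θ the function z ↦ f(θ, z) is a probability density with respect to Lebesgue measure. Let g : ℝ → ℝ be a continuously differentiable, strictly increasing bijection with g'(y) > 0 for all y. Consider the hierarchical model: θ ∼ π, and given θ, Z₁, …, Zₙ are i.i.d. with density f(θ, ·); set Yᵢ = g⁻¹(Zᵢ). Then the joint law of (Y₁, …, Yₙ) is absolutely continuous with respect to Lebesgue measure on ℝⁿ with density p(y₁, …, yₙ) = ω(y | g) · ∏_{i=1}^n p_Y(yᵢ), where p_Y(t) = g'(t) ∫_Θ f(θ, g(t)) dπ(θ) is the marginal density of a single observation, and the correction factor is ω(y | g) = [∫_Θ ∏_{i=1}^n f(θ, g(yᵢ)) dπ(θ)] / [∏_{i=1}^n ∫_Θ f(θ, g(yᵢ)) dπ(θ)], at every point (y₁, …, yₙ) where each factor ∫_Θ f(θ, g(yᵢ)) dπ(θ) is positive and finite. -/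
open MeasureTheory ProbabilityTheory ENNReal

/-!
Conditionally on `θ` the `Yᵢ = g⁻¹ (Zᵢ)` are independent, and the one-dimensional change of
variables gives each of them the density `t ↦ |g' t| f(θ, g t)`. Integrating the product density
over `θ` gives the joint density `∏ᵢ |g' (yᵢ)| · ∫ ∏ᵢ f(θ, g yᵢ) dπ(θ)`; multiplying and dividing
by `∏ᵢ ∫ f(θ, g yᵢ) dπ(θ)` produces the marginal densities and the correction factor.

The integral `∫ ∏ᵢ f(θ, g yᵢ) dπ(θ)` may be infinite even where all the one-dimensional integrals
are finite. As the joint law is finite, this happens only on a null set, so the density may be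
replaced by its real-valued version, which factorizes at every required point.
-/

section ProductMeasures

theorem lintegral_fin_prod_eq_prod {n : ℕ} {E : Fin n → Type*} [∀ i, MeasurableSpace (E i)]
    (μ : ∀ i, Measure (E i)) [∀ i, SigmaFinite (μ i)] {h : ∀ i, E i → ℝ≥0∞}
    (hh : ∀ i, Measurable (h i)) :
    ∫⁻ x, ∏ i, h i (x i) ∂Measure.pi μ = ∏ i, ∫⁻ t, h i t ∂μ i := by
  induction n with
  | zero => simp
  | succ n ih =>
    have hm : Measurable fun x : (∀ i : Fin n, E i.succ) => ∏ i, h i.succ (x i) := by fun_prop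
    calc ∫⁻ x, ∏ i, h i (x i) ∂Measure.pi μ
        = ∫⁻ x : E 0 × (∀ i : Fin n, E i.succ), h 0 x.1 * ∏ i, h i.succ (x.2 i)
            ∂(μ 0).prod (Measure.pi fun i => μ i.succ) := by
          simp_rw [Fin.prod_univ_succ]
          exact (measurePreserving_piFinSuccAbove μ 0).lintegral_comp
            (((hh 0).comp measurable_fst).mul (hm.comp measurable_snd))
      _ = (∫⁻ t, h 0 t ∂μ 0) * ∏ i : Fin n, ∫⁻ t, h i.succ t ∂μ i.succ := by
          rw [lintegral_prod_mul (hh 0).aemeasurable hm.aemeasurable, ih _ fun i => hh i.succ]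
      _ = ∏ i, ∫⁻ t, h i t ∂μ i := by rw [Fin.prod_univ_succ]

variable {ι : Type*} [Fintype ι] {E : ι → Type*} [∀ i, MeasurableSpace (E i)]
  (μ : ∀ i, Measure (E i)) [∀ i, SigmaFinite (μ i)] {h : ∀ i, E i → ℝ≥0∞}

theorem lintegral_fintype_prod_eq_prod (hh : ∀ i, Measurable (h i)) :
    ∫⁻ x, ∏ i, h i (x i) ∂Measure.pi μ = ∏ i, ∫⁻ t, h i t ∂μ i := by
  let e := (Fintype.equivFin ι).symm
  rw [← (measurePreserving_piCongrLeft μ e).lintegral_comp_emb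
    (MeasurableEquiv.measurableEmbedding _)]
  simp_rw [← e.prod_comp, MeasurableEquiv.coe_piCongrLeft, Equiv.piCongrLeft_apply_apply]
  exact lintegral_fin_prod_eq_prod _ fun i => hh (e i)

theorem pi_withDensity [∀ i, SigmaFinite ((μ i).withDensity (h i))]
    (hh : ∀ i, Measurable (h i)) :
    Measure.pi (fun i => (μ i).withDensity (h i)) =
      (Measure.pi μ).withDensity fun x => ∏ i, h i (x i) := by
  refine Measure.pi_eq fun s hs => ?_
  rw [withDensity_apply _ (MeasurableSet.univ_pi hs), Measure.restrict_pi_pi,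
    lintegral_fintype_prod_eq_prod _ hh]
  exact Finset.prod_congr rfl fun i _ => (withDensity_apply _ (hs i)).symm

end ProductMeasures

section Densities

variable {Θ X : Type*} [MeasurableSpace Θ] [MeasurableSpace X]

theorem comp_eq_withDensity_lintegral (π : Measure Θ) [SFinite π] {ν : Measure X} [SFinite ν]
    {κ : Kernel Θ X} {q : Θ → X → ℝ≥0∞} (hq : Measurable (Function.uncurry q))
    (hκ : ∀ θ, κ θ = ν.withDensity (q θ)) :
    κ ∘ₘ π = ν.withDensity fun x => ∫⁻ θ, q θ x ∂π := by
  ext s hs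
  rw [Measure.bind_apply hs κ.aemeasurable, withDensity_apply _ hs,
    ← lintegral_lintegral_swap hq.aemeasurable]
  simp_rw [hκ, withDensity_apply _ hs]

theorem withDensity_ofReal_toReal {ν : Measure X} {h : X → ℝ≥0∞} (hh : AEMeasurable h ν)
    [IsFiniteMeasure (ν.withDensity h)] :
    ν.withDensity (fun x => ENNReal.ofReal (h x).toReal) = ν.withDensity h := by
  have hfin : ∫⁻ x, h x ∂ν ≠ ∞ := by
    rw [← setLIntegral_univ, ← withDensity_apply _ MeasurableSet.univ]
    exact measure_ne_top _ _
  exact withDensity_congr_ae (ofReal_toReal_ae_eq (ae_lt_top' hh hfin))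

theorem isProbabilityMeasure_withDensity_ofReal {ν : Measure X} {h : X → ℝ} (hh : 0 ≤ᵐ[ν] h)
    (hint : ∫ x, h x ∂ν = 1) :
    IsProbabilityMeasure (ν.withDensity fun x => ENNReal.ofReal (h x)) := by
  refine ⟨?_⟩
  rw [withDensity_apply _ MeasurableSet.univ, setLIntegral_univ,
    ← ofReal_integral_eq_lintegral_ofReal (integrable_of_integral_eq_one hint) hh, hint,
    ENNReal.ofReal_one]

end Densities

section ChangeOfVariables

theorem invFun_preimage_eq_image {α β : Type*} [Nonempty α] {g : α → β}
    (hg : Function.Bijective g) (s : Set α) : Function.invFun g ⁻¹' s = g '' s :=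
  (congrFun (Set.image_eq_preimage_of_inverse (Function.leftInverse_invFun hg.injective)
    (Function.rightInverse_invFun hg.surjective)) s).symm

theorem measurableEmbedding_invFun {α β : Type*} [MeasurableSpace α] [MeasurableSpace β]
    [Nonempty α] {g : α → β} (hg : MeasurableEmbedding g) (hsurj : Function.Surjective g) :
    MeasurableEmbedding (Function.invFun g) := by
  have hmeas : Measurable (Function.invFun g) := fun s hs => by
    rw [invFun_preimage_eq_image ⟨hg.injective, hsurj⟩]
    exact hg.measurableSet_image' hs
  refine .of_measurable_inverse hmeas ?_ hg.measurable (Function.rightInverse_invFun hsurj)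
  rw [(Function.invFun_surjective hg.injective).range_eq]
  exact MeasurableSet.univ

variable {g : ℝ → ℝ} (hg : Differentiable ℝ g) (hbij : Function.Bijective g)
include hg hbij

theorem map_invFun_withDensity (h : ℝ → ℝ≥0∞) :
    (volume.withDensity h).map (Function.invFun g) =
      volume.withDensity fun t => ENNReal.ofReal |deriv g t| * h (g t) := by
  have hemb : MeasurableEmbedding g := hg.continuous.measurableEmbedding hbij.injective
  ext s hs
  rw [(measurableEmbedding_invFun hemb hbij.surjective).map_apply,
    invFun_preimage_eq_image hbij, withDensity_apply _ (hemb.measurableSet_image' hs),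
    withDensity_apply _ hs, lintegral_image_eq_lintegral_abs_deriv_mul hs
      (fun t _ => (hg t).hasDerivAt.hasDerivWithinAt) hbij.injective.injOn]

theorem map_invFun_pi_withDensity {ι : Type*} [Fintype ι] {h : ℝ → ℝ≥0∞} (hh : Measurable h)
    [SigmaFinite (volume.withDensity h)] :
    (Measure.pi fun _ : ι => volume.withDensity h).map (fun z i => Function.invFun g (z i)) =
      volume.withDensity fun y => ∏ i, ENNReal.ofReal |deriv g (y i)| * h (g (y i)) := by
  have hgm : Measurable g := hg.continuous.measurable
  have hinv : MeasurableEmbedding (Function.invFun g) :=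
    measurableEmbedding_invFun (hg.continuous.measurableEmbedding hbij.injective) hbij.surjective
  have hmap := map_invFun_withDensity hg hbij h
  have hσ : SigmaFinite ((volume.withDensity h).map (Function.invFun g)) := hinv.sigmaFinite_map
  rw [Measure.pi_map_pi fun _ => hinv.measurable.aemeasurable]
  rw [hmap] at hσ ⊢
  exact pi_withDensity _ fun _ => by fun_prop

end ChangeOfVariables

section Mixture

variable {Θ X ι : Type*} [MeasurableSpace Θ] [Fintype ι] (π : Measure Θ)

/-- The joint density of observations which, given `θ ∼ π`, are i.i.d. with density `q θ`. -/
noncomputable def iidMixtureDensity (q : Θ → X → ℝ≥0∞) (x : ι → X) : ℝ≥0∞ :=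
  ∫⁻ θ, ∏ i, q θ (x i) ∂π

/-- The correction factor `ω`: the ratio of the joint density of conditionally i.i.d. observations
to the product of their marginal densities. It is real-valued, so an infinite integral counts
as `0`. -/
noncomputable def correctionFactor (q : Θ → X → ℝ≥0∞) (x : ι → X) : ℝ :=
  (iidMixtureDensity π q x).toReal / ∏ i, (∫⁻ θ, q θ (x i) ∂π).toReal

theorem measurable_uncurry_prod [MeasurableSpace X] {q : Θ → X → ℝ≥0∞}
    (hq : Measurable (Function.uncurry q)) :
    Measurable (Function.uncurry fun θ (x : ι → X) => ∏ i, q θ (x i)) := by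
  fun_prop

theorem measurable_iidMixtureDensity [MeasurableSpace X] [SFinite π] {q : Θ → X → ℝ≥0∞}
    (hq : Measurable (Function.uncurry q)) :
    Measurable (iidMixtureDensity π q : (ι → X) → ℝ≥0∞) :=
  (measurable_uncurry_prod hq).lintegral_prod_left

theorem iidMixtureDensity_mul_comp {Y : Type*} (q : Θ → X → ℝ≥0∞) (g : Y → X) {c : Y → ℝ≥0∞}
    (hc : ∀ t, c t ≠ ∞) (y : ι → Y) :
    iidMixtureDensity π (fun θ t => c t * q θ (g t)) y =
      (∏ i, c (y i)) * iidMixtureDensity π q (fun i => g (y i)) := by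
  simp_rw [iidMixtureDensity, Finset.prod_mul_distrib]
  exact lintegral_const_mul' _ _ (ENNReal.prod_ne_top fun i _ => hc (y i))

theorem correctionFactor_mul_prod {q : Θ → X → ℝ≥0∞} {x : ι → X}
    (hpos : ∀ i, 0 < ∫⁻ θ, q θ (x i) ∂π) (hlt : ∀ i, ∫⁻ θ, q θ (x i) ∂π < ∞) :
    correctionFactor π q x * ∏ i, (∫⁻ θ, q θ (x i) ∂π).toReal =
      (iidMixtureDensity π q x).toReal :=
  div_mul_cancel₀ _ <| Finset.prod_ne_zero_iff.2 fun i _ =>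
    (ENNReal.toReal_pos (hpos i).ne' (hlt i).ne).ne'

theorem toReal_iidMixtureDensity_mul_comp {Y : Type*} {q : Θ → X → ℝ≥0∞} {g : Y → X}
    {c : Y → ℝ≥0∞} (hc : ∀ t, c t ≠ ∞) {y : ι → Y} (hpos : ∀ i, 0 < ∫⁻ θ, q θ (g (y i)) ∂π)
    (hlt : ∀ i, ∫⁻ θ, q θ (g (y i)) ∂π < ∞) :
    (iidMixtureDensity π (fun θ t => c t * q θ (g t)) y).toReal =
      correctionFactor π q (fun i => g (y i)) *
        ∏ i, (c (y i)).toReal * (∫⁻ θ, q θ (g (y i)) ∂π).toReal := by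
  rw [iidMixtureDensity_mul_comp π q g hc, ENNReal.toReal_mul, ENNReal.toReal_prod,
    ← correctionFactor_mul_prod π hpos hlt, Finset.prod_mul_distrib, mul_left_comm]

theorem map_invFun_compProd_eq_withDensity [SFinite π] {q : Θ → ℝ → ℝ≥0∞}
    (hq : Measurable (Function.uncurry q)) [∀ θ, SigmaFinite (volume.withDensity (q θ))]
    {κ : Kernel Θ (ι → ℝ)} [IsSFiniteKernel κ]
    (hκ : ∀ θ, κ θ = Measure.pi fun _ => volume.withDensity (q θ))
    {g : ℝ → ℝ} (hg : Differentiable ℝ g) (hbij : Function.Bijective g) :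
    (π ⊗ₘ κ).map (fun p i => Function.invFun g (p.2 i)) =
      volume.withDensity
        (iidMixtureDensity π fun θ t => ENNReal.ofReal |deriv g t| * q θ (g t)) := by
  have hgm : Measurable g := hg.continuous.measurable
  have hinv : Measurable (Function.invFun g) := (measurableEmbedding_invFun
    (hg.continuous.measurableEmbedding hbij.injective) hbij.surjective).measurable
  have hT : Measurable fun (z : ι → ℝ) i => Function.invFun g (z i) := by fun_prop
  have hp : Measurable
      (Function.uncurry fun θ t => ENNReal.ofReal |deriv g t| * q θ (g t)) := by fun_prop
  calc (π ⊗ₘ κ).map (fun p i => Function.invFun g (p.2 i))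
      = (κ.map fun z i => Function.invFun g (z i)) ∘ₘ π := by
        rw [← Measure.map_comp _ _ hT, ← Measure.snd_compProd, Measure.snd,
          Measure.map_map hT measurable_snd]
        rfl
    _ = _ := comp_eq_withDensity_lintegral π (measurable_uncurry_prod hp) fun θ => by
        rw [Kernel.map_apply _ hT, hκ]
        exact map_invFun_pi_withDensity hg hbij hq.of_uncurry_left

end Mixture

theorem joint_density_factorization_correction_factor_general
    {Θ ι : Type*} [MeasurableSpace Θ] [Fintype ι] (π : Measure Θ) [IsFiniteMeasure π]
    (f : Θ → ℝ → ℝ)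
    (hf_meas : Measurable (Function.uncurry f))
    (hf_nonneg : ∀ θ z, 0 ≤ f θ z)
    (hf_dens : ∀ θ, ∫ z : ℝ, f θ z = 1)
    (g : ℝ → ℝ) (hg_diff : Differentiable ℝ g) (hg_bij : Function.Bijective g)
    (κ : Kernel Θ (ι → ℝ))
    (hκ : ∀ θ, κ θ =
      Measure.pi fun _ : ι => volume.withDensity fun z => ENNReal.ofReal (f θ z))
    (μY : Measure (ι → ℝ))
    (hμY : μY = (π ⊗ₘ κ).map fun p => fun i => Function.invFun g (p.2 i))
    (pY : ℝ → ℝ)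
    (hpY : ∀ t : ℝ, pY t = |deriv g t| * (∫⁻ θ, ENNReal.ofReal (f θ (g t)) ∂π).toReal)
    (ω : (ι → ℝ) → ℝ)
    (hω : ∀ y : ι → ℝ, ω y =
      (∫⁻ θ, ENNReal.ofReal (∏ i, f θ (g (y i))) ∂π).toReal /
        ∏ i, (∫⁻ θ, ENNReal.ofReal (f θ (g (y i))) ∂π).toReal) :
    μY ≪ (volume : Measure (ι → ℝ)) ∧
    ∃ dens : (ι → ℝ) → ℝ≥0∞,
      μY = volume.withDensity dens ∧
      ∀ y : ι → ℝ,
        (∀ i, 0 < ∫⁻ θ, ENNReal.ofReal (f θ (g (y i))) ∂π) →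
        (∀ i, (∫⁻ θ, ENNReal.ofReal (f θ (g (y i))) ∂π) < ⊤) →
        dens y = ENNReal.ofReal (ω y * ∏ i, pY (y i)) := by
  let q : Θ → ℝ → ℝ≥0∞ := fun θ z => ENNReal.ofReal (f θ z)
  let J : (ι → ℝ) → ℝ≥0∞ :=
    iidMixtureDensity π fun θ t => ENNReal.ofReal |deriv g t| * q θ (g t)
  have hgm : Measurable g := hg_diff.continuous.measurable
  have hprob (θ : Θ) : IsProbabilityMeasure (volume.withDensity (q θ)) :=
    isProbabilityMeasure_withDensity_ofReal (.of_forall (hf_nonneg θ)) (hf_dens θ)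
  have hmarkov : IsMarkovKernel κ := ⟨fun θ => by rw [hκ]; infer_instance⟩
  have hlaw : μY = volume.withDensity J :=
    hμY.trans (map_invFun_compProd_eq_withDensity π (by fun_prop) hκ hg_diff hg_bij)
  have hfin : IsFiniteMeasure (volume.withDensity J) := by
    rw [← hlaw, hμY]
    infer_instance
  have hJ : Measurable J := measurable_iidMixtureDensity π (by fun_prop)
  have hω_eq (y : ι → ℝ) : ω y = correctionFactor π q fun i => g (y i) := by
    simp only [hω, correctionFactor, iidMixtureDensity, q,
      ENNReal.ofReal_prod_of_nonneg fun _ _ => hf_nonneg _ _]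
  refine ⟨hlaw ▸ withDensity_absolutelyContinuous _ _, fun y => ENNReal.ofReal (J y).toReal,
    hlaw.trans (withDensity_ofReal_toReal hJ.aemeasurable).symm, fun y hpos hlt => ?_⟩
  simp only [J, toReal_iidMixtureDensity_mul_comp π (q := q) (fun _ => ENNReal.ofReal_ne_top)
    hpos hlt, ENNReal.toReal_ofReal (abs_nonneg _), hω_eq, hpY, q]

/-- **Theorem 1 of the paper.** Under the hierarchical model `θ ∼ π`,
`Z₁,…,Zₙ | θ` i.i.d. with density `f θ ·`, and `Yᵢ = g⁻¹(Zᵢ)` for a `C¹` strictly increasing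
bijection `g` with positive derivative, the joint law of `(Y₁,…,Yₙ)` is absolutely continuous
with respect to Lebesgue measure on `ℝⁿ`, with a density that factorizes as
`ω(y | g) ∏ᵢ p_Y(yᵢ)` at every point `y` where each factor `∫ f(θ, g(yᵢ)) dπ(θ)` is positive
and finite, where `p_Y(t) = g'(t) ∫ f(θ, g(t)) dπ(θ)` and
`ω(y | g) = ∫ ∏ᵢ f(θ, g(yᵢ)) dπ(θ) / ∏ᵢ ∫ f(θ, g(yᵢ)) dπ(θ)`. -/
theorem joint_density_factorization_correction_factor
    {Θ : Type*} [MeasurableSpace Θ] (π : Measure Θ) [IsProbabilityMeasure π]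
    (n : ℕ) (f : Θ → ℝ → ℝ)
    (hf_meas : Measurable (Function.uncurry f))
    (hf_nonneg : ∀ θ z, 0 ≤ f θ z)
    (hf_dens : ∀ θ, ∫ z : ℝ, f θ z = 1)
    (g : ℝ → ℝ) (hg_smooth : ContDiff ℝ 1 g) (hg_mono : StrictMono g)
    (hg_bij : Function.Bijective g) (hg_deriv : ∀ t : ℝ, 0 < deriv g t)
    -- the conditional law of `(Z₁,…,Zₙ)` given `θ`: i.i.d. with density `f θ ·`
    (κ : Kernel Θ (Fin n → ℝ)) [IsSFiniteKernel κ]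
    (hκ : ∀ θ, κ θ =
      Measure.pi fun _ : Fin n => volume.withDensity fun z => ENNReal.ofReal (f θ z))
    -- the joint law of `(Y₁,…,Yₙ)`, `Yᵢ = g⁻¹ (Zᵢ)`
    (μY : Measure (Fin n → ℝ))
    (hμY : μY = (π ⊗ₘ κ).map fun p => fun i => Function.invFun g (p.2 i))
    -- the marginal density of a single observation
    (pY : ℝ → ℝ)
    (hpY : ∀ t : ℝ, pY t = deriv g t * (∫⁻ θ, ENNReal.ofReal (f θ (g t)) ∂π).toReal)
    -- the correction factor
    (ω : (Fin n → ℝ) → ℝ)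
    (hω : ∀ y : Fin n → ℝ, ω y =
      (∫⁻ θ, ENNReal.ofReal (∏ i, f θ (g (y i))) ∂π).toReal /
        ∏ i, (∫⁻ θ, ENNReal.ofReal (f θ (g (y i))) ∂π).toReal) :
    μY ≪ (volume : Measure (Fin n → ℝ)) ∧
    ∃ dens : (Fin n → ℝ) → ℝ≥0∞,
      μY = volume.withDensity dens ∧
      ∀ y : Fin n → ℝ,
        (∀ i, 0 < ∫⁻ θ, ENNReal.ofReal (f θ (g (y i))) ∂π) →
        (∀ i, (∫⁻ θ, ENNReal.ofReal (f θ (g (y i))) ∂π) < ⊤) →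
        dens y = ENNReal.ofReal (ω y * ∏ i, pY (y i)) :=
  joint_density_factorization_correction_factor_general π f hf_meas hf_nonneg hf_dens g
    (hg_smooth.differentiable one_ne_zero) hg_bij κ hκ μY hμY pY
    (fun t => by rw [hpY, abs_of_pos (hg_deriv t)]) ω hω
end

section
/- Let F_{Y,n}, F_{Y,0} : ℝ → [0,1] be nondecreasing with F_{Y,n}(t) → F_{Y,0}(t) for every t ∈ ℝ, and let F_{Z,n}, F_{Z,0} : ℝ → [0,1] be nondecreasing with F_{Z,n}(s) → F_{Z,0}(s) for every s ∈ ℝ, where F_{Z,0} is continuous and strictly increasing with infimum 0 and supremum 1. Define Ỹ = {t ∈ ℝ : 0 < F_{Y,0}(t) < 1}, g_n(t) = inf{s ∈ ℝ : F_{Z,n}(s) ≥ F_{Y,n}(t)}, and g₀(t) = F_{Z,0}⁻¹(F_{Y,0}(t)). Then: (i) for every t ∈ Ỹ, g_n(t) is a finite real number for all sufficiently large n and g_n(t) → g₀(t); and (ii) if in addition F_{Y,0} is continuous, then for every compact set K ⊆ Ỹ, sup_{t ∈ K} |g_n(t) − g₀(t)| → 0. -/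
open Filter

/-!
If `F a < p ≤ F b` with `F` monotone, the generalized inverse of `F` at `p` lies in `[a, b]`. When
the limit `F₀` is strictly increasing, `F₀ a < F₀ s < F₀ b` for all `a < s < b`, and convergence at
the two points `a`, `b` alone passes these strict inequalities on to `F i` and to levels
`p i → F₀ s`. Hence generalized inverses converge even when their level varies with the index.

Monotone functions converging pointwise to a limit continuous at `t₀` also converge jointly, as
`(i, t) → (∞, t₀)`, because on an interval around `t₀` they are squeezed between their values at its
endpoints. The convergence of generalized inverses, with `(i, t)` as index and `FY i t` as level,
then gives joint convergence of the transformations; their limit being continuous, this is locally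
uniform convergence.
-/

open scoped Topology

section Bracket

variable {α β : Type*}

/-- The generalized inverse `F⁻(p) = inf {s | p ≤ F s}` (the quantile function when `F` is a
distribution function). Where the set is empty or unbounded below this is the junk value of
`sInf`. -/
def generalizedInverse [InfSet α] [LE β] (F : α → β) (p : β) : α :=
  sInf {s | p ≤ F s}

variable [Preorder β] {F : α → β}

lemma mem_lowerBounds_setOf_le_of_lt [LinearOrder α] {p : β} {a : α} (hF : Monotone F)
    (ha : F a < p) : a ∈ lowerBounds {s | p ≤ F s} :=
  fun _ hs => (hF.reflect_lt (ha.trans_le hs)).le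

variable [ConditionallyCompleteLinearOrder α]

lemma generalizedInverse_mem_Icc {p : β} {a b : α} (hF : Monotone F) (ha : F a < p)
    (hb : p ≤ F b) : generalizedInverse F p ∈ Set.Icc a b :=
  have ha' := mem_lowerBounds_setOf_le_of_lt hF ha
  ⟨le_csInf ⟨b, hb⟩ ha', csInf_le ⟨a, ha'⟩ hb⟩

lemma generalizedInverse_apply_self (hF : StrictMono F) (s : α) :
    generalizedInverse F (F s) = s := by
  simp only [generalizedInverse, hF.le_iff_le]
  exact csInf_Ici

end Bracket

section Limits

variable {ι α β : Type*} [LinearOrder β] [TopologicalSpace β] [OrderClosedTopology β]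
  {l : Filter ι} {F : ι → α → β} {F₀ : α → β} {p : ι → β} {s : α}

lemma eventually_lt_and_lt_of_strictMono [Preorder α] {a b : α} (hF₀ : StrictMono F₀)
    (hlim : ∀ x, Tendsto (F · x) l (𝓝 (F₀ x))) (hp : Tendsto p l (𝓝 (F₀ s)))
    (ha : a < s) (hb : s < b) : ∀ᶠ i in l, F i a < p i ∧ p i < F i b :=
  ((hlim a).eventually_lt hp (hF₀ ha)).and (hp.eventually_lt (hlim b) (hF₀ hb))

lemma eventually_nonempty_and_bddBelow_setOf_le [LinearOrder α] [NoMinOrder α] [NoMaxOrder α]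
    (hF : ∀ i, Monotone (F i)) (hF₀ : StrictMono F₀)
    (hlim : ∀ x, Tendsto (F · x) l (𝓝 (F₀ x))) (hp : Tendsto p l (𝓝 (F₀ s))) :
    ∀ᶠ i in l, {x | p i ≤ F i x}.Nonempty ∧ BddBelow {x | p i ≤ F i x} := by
  obtain ⟨a, ha⟩ := exists_lt s
  obtain ⟨b, hb⟩ := exists_gt s
  filter_upwards [eventually_lt_and_lt_of_strictMono hF₀ hlim hp ha hb] with i ⟨hai, hbi⟩
  exact ⟨⟨b, hbi.le⟩, ⟨a, mem_lowerBounds_setOf_le_of_lt (hF i) hai⟩⟩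

variable [ConditionallyCompleteLinearOrder α] [NoMinOrder α] [NoMaxOrder α] [DenselyOrdered α]
  [TopologicalSpace α] [OrderTopology α]

theorem tendsto_generalizedInverse (hF : ∀ i, Monotone (F i)) (hF₀ : StrictMono F₀)
    (hlim : ∀ x, Tendsto (F · x) l (𝓝 (F₀ x))) (hp : Tendsto p l (𝓝 (F₀ s))) :
    Tendsto (fun i => generalizedInverse (F i) (p i)) l (𝓝 s) := by
  have eventually_mem_Icc {a b : α} (ha : a < s) (hb : s < b) :
      ∀ᶠ i in l, generalizedInverse (F i) (p i) ∈ Set.Icc a b :=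
    (eventually_lt_and_lt_of_strictMono hF₀ hlim hp ha hb).mono fun i hi =>
      generalizedInverse_mem_Icc (hF i) hi.1 hi.2.le
  refine (nhds_basis_Ioo s).tendsto_right_iff.2 fun ⟨a, b⟩ ⟨ha, hb⟩ => ?_
  obtain ⟨a', haa', ha's⟩ := exists_between ha
  obtain ⟨b', hsb', hb'b⟩ := exists_between hb
  exact (eventually_mem_Icc ha's hsb').mono fun i hi => Set.Icc_subset_Ioo haa' hb'b hi

lemma continuousAt_generalizedInverse (hF₀ : StrictMono F₀) (s : α) :
    ContinuousAt (generalizedInverse F₀) (F₀ s) := by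
  rw [ContinuousAt, generalizedInverse_apply_self hF₀]
  exact tendsto_generalizedInverse (fun _ => hF₀.monotone) hF₀ (fun _ => tendsto_const_nhds)
    tendsto_id

end Limits

lemma tendsto_prod_nhds_of_monotone {ι T β : Type*}
    [LinearOrder T] [TopologicalSpace T] [OrderTopology T]
    [LinearOrder β] [TopologicalSpace β] [OrderTopology β]
    {l : Filter ι} {F : ι → T → β} {f : T → β} {t₀ : T} (hF : ∀ i, Monotone (F i))
    (hlim : ∀ t, Tendsto (F · t) l (𝓝 (f t))) (hf : ContinuousAt f t₀) :
    Tendsto (fun x : ι × T => F x.1 x.2) (l ×ˢ 𝓝 t₀) (𝓝 (f t₀)) := by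
  refine tendsto_order.2 ⟨fun c hc => ?_, fun c hc => ?_⟩
  · obtain ⟨t₁, t₂, ht₀, hnhds, hsub⟩ :=
      exists_Icc_mem_subset_of_mem_nhds (hf.eventually (lt_mem_nhds hc))
    have hct₁ : c < f t₁ := hsub (Set.left_mem_Icc.2 (ht₀.1.trans ht₀.2))
    filter_upwards [prod_mem_prod ((hlim t₁).eventually (lt_mem_nhds hct₁)) hnhds]
      with ⟨i, t⟩ ⟨hi, ht⟩
    exact lt_of_lt_of_le hi (hF i ht.1)
  · obtain ⟨t₁, t₂, ht₀, hnhds, hsub⟩ :=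
      exists_Icc_mem_subset_of_mem_nhds (hf.eventually (gt_mem_nhds hc))
    have hct₂ : f t₂ < c := hsub (Set.right_mem_Icc.2 (ht₀.1.trans ht₀.2))
    filter_upwards [prod_mem_prod ((hlim t₂).eventually (gt_mem_nhds hct₂)) hnhds]
      with ⟨i, t⟩ ⟨hi, ht⟩
    exact lt_of_le_of_lt (hF i ht.2) hi

lemma tendstoLocallyUniformlyOn_of_tendsto_prod {ι T α : Type*} [TopologicalSpace T]
    [UniformSpace α] {l : Filter ι} {F : ι → T → α} {f : T → α} {S : Set T}
    (hF : ∀ t ∈ S, Tendsto (fun x : ι × T => F x.1 x.2) (l ×ˢ 𝓝[S] t) (𝓝 (f t)))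
    (hf : ContinuousOn f S) : TendstoLocallyUniformlyOn F f l S :=
  tendstoLocallyUniformlyOn_iff_forall_tendsto.2 fun t ht =>
    (((hf t ht).tendsto.comp tendsto_snd).prodMk_nhds (hF t ht)).mono_right
      (nhds_le_uniformity (f t))

theorem tendstoLocallyUniformlyOn_generalizedInverse {ι T α β : Type*}
    [LinearOrder T] [TopologicalSpace T] [OrderTopology T]
    [LinearOrder β] [TopologicalSpace β] [OrderTopology β]
    [ConditionallyCompleteLinearOrder α] [NoMinOrder α] [NoMaxOrder α] [DenselyOrdered α]
    [UniformSpace α] [OrderTopology α]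
    {l : Filter ι} {P : ι → T → β} {P₀ : T → β} {F : ι → α → β} {F₀ : α → β}
    {S : Set T} {g : T → α}
    (hP : ∀ i, Monotone (P i)) (hPlim : ∀ t, Tendsto (P · t) l (𝓝 (P₀ t)))
    (hF : ∀ i, Monotone (F i)) (hF₀ : StrictMono F₀)
    (hFlim : ∀ s, Tendsto (F · s) l (𝓝 (F₀ s)))
    (hg : ∀ t ∈ S, F₀ (g t) = P₀ t) (hP₀ : ∀ t ∈ S, ContinuousAt P₀ t) :
    TendstoLocallyUniformlyOn (fun i t => generalizedInverse (F i) (P i t)) g l S := by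
  have g_eq : S.EqOn g (generalizedInverse F₀ ∘ P₀) := fun t ht => by
    rw [Function.comp_apply, ← hg t ht, generalizedInverse_apply_self hF₀]
  have g_continuousOn : ContinuousOn g S := by
    refine ContinuousOn.congr (fun t ht => ?_) g_eq
    have hinv : ContinuousAt (generalizedInverse F₀) (P₀ t) :=
      hg t ht ▸ continuousAt_generalizedInverse hF₀ (g t)
    exact (hinv.comp (hP₀ t ht)).continuousWithinAt
  refine tendstoLocallyUniformlyOn_of_tendsto_prod (fun t ht => ?_) g_continuousOn
  have levels_tendsto : Tendsto (fun x : ι × T => P x.1 x.2) (l ×ˢ 𝓝 t) (𝓝 (F₀ (g t))) :=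
    hg t ht ▸ tendsto_prod_nhds_of_monotone hP hPlim (hP₀ t ht)
  have inverses_tendsto :
      Tendsto (fun x : ι × T => generalizedInverse (F x.1) (P x.1 x.2)) (l ×ˢ 𝓝 t) (𝓝 (g t)) :=
    tendsto_generalizedInverse (fun x => hF x.1) hF₀ (fun s => (hFlim s).comp tendsto_fst)
      levels_tendsto
  exact inverses_tendsto.mono_left (prod_mono_right l nhdsWithin_le_nhds)

theorem transformation_consistency_general {ι T α β : Type*}
    [LinearOrder T] [TopologicalSpace T] [OrderTopology T]
    [LinearOrder β] [TopologicalSpace β] [OrderTopology β]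
    [ConditionallyCompleteLinearOrder α] [NoMinOrder α] [NoMaxOrder α] [DenselyOrdered α]
    [UniformSpace α] [OrderTopology α]
    {l : Filter ι} {FY : ι → T → β} {FY₀ : T → β} {FZ : ι → α → β} {FZ₀ : α → β}
    {S : Set T} {g₀ : T → α}
    (hFY : ∀ i, Monotone (FY i)) (hFYlim : ∀ t, Tendsto (FY · t) l (𝓝 (FY₀ t)))
    (hFZ : ∀ i, Monotone (FZ i)) (hFZ₀ : StrictMono FZ₀)
    (hFZlim : ∀ s, Tendsto (FZ · s) l (𝓝 (FZ₀ s)))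
    (hg₀ : ∀ t ∈ S, FZ₀ (g₀ t) = FY₀ t) :
    (∀ t ∈ S,
      (∀ᶠ i in l, {s | FY i t ≤ FZ i s}.Nonempty ∧ BddBelow {s | FY i t ≤ FZ i s}) ∧
      Tendsto (fun i => generalizedInverse (FZ i) (FY i t)) l (𝓝 (g₀ t))) ∧
    ((∀ t ∈ S, ContinuousAt FY₀ t) →
      TendstoLocallyUniformlyOn (fun i t => generalizedInverse (FZ i) (FY i t)) g₀ l S) := by
  refine ⟨fun t ht => ?_,
    tendstoLocallyUniformlyOn_generalizedInverse hFY hFYlim hFZ hFZ₀ hFZlim hg₀⟩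
  have hlevel : Tendsto (FY · t) l (𝓝 (FZ₀ (g₀ t))) := hg₀ t ht ▸ hFYlim t
  exact ⟨eventually_nonempty_and_bddBelow_setOf_le hFZ hFZ₀ hFZlim hlevel,
    tendsto_generalizedInverse hFZ hFZ₀ hFZlim hlevel⟩

/-- **deterministic core of Theorem 2 of the paper.** If the nondecreasing
`F_{Y,n} → F_{Y,0}` and `F_{Z,n} → F_{Z,0}` pointwise, where `F_{Z,0}` is continuous and
strictly increasing with infimum `0` and supremum `1`, then on
`Ỹ = {t : 0 < F_{Y,0}(t) < 1}` the generalized-inverse transformations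
`gₙ(t) = inf{s : F_{Z,n}(s) ≥ F_{Y,n}(t)}` are eventually finite and converge pointwise to
`g₀ = F_{Z,0}⁻¹ ∘ F_{Y,0}`; if moreover `F_{Y,0}` is continuous, the convergence is uniform
on every compact subset of `Ỹ`. -/
theorem transformation_consistency
    (FYn : ℕ → ℝ → ℝ) (FY0 : ℝ → ℝ)
    (hFYn_mono : ∀ n, Monotone (FYn n)) (hFY0_mono : Monotone FY0)
    (hFYn_range : ∀ n, ∀ t : ℝ, FYn n t ∈ Set.Icc (0 : ℝ) 1)
    (hFY0_range : ∀ t : ℝ, FY0 t ∈ Set.Icc (0 : ℝ) 1)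
    (hFY_conv : ∀ t : ℝ, Tendsto (fun n => FYn n t) atTop (nhds (FY0 t)))
    (FZn : ℕ → ℝ → ℝ) (FZ0 : ℝ → ℝ)
    (hFZn_mono : ∀ n, Monotone (FZn n))
    (hFZn_range : ∀ n, ∀ s : ℝ, FZn n s ∈ Set.Icc (0 : ℝ) 1)
    (hFZ0_cont : Continuous FZ0) (hFZ0_mono : StrictMono FZ0)
    (hFZ0_inf : (⨅ s : ℝ, FZ0 s) = 0) (hFZ0_sup : (⨆ s : ℝ, FZ0 s) = 1)
    (hFZ0_range : ∀ s : ℝ, FZ0 s ∈ Set.Icc (0 : ℝ) 1)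
    (hFZ_conv : ∀ s : ℝ, Tendsto (fun n => FZn n s) atTop (nhds (FZ0 s)))
    (Ytil : Set ℝ) (hYtil : Ytil = {t : ℝ | 0 < FY0 t ∧ FY0 t < 1})
    (gn : ℕ → ℝ → ℝ)
    (hgn : ∀ n, ∀ t : ℝ, gn n t = sInf {s : ℝ | FYn n t ≤ FZn n s})
    (g0 : ℝ → ℝ) (hg0 : ∀ t ∈ Ytil, FZ0 (g0 t) = FY0 t) :
    (∀ t ∈ Ytil,
      (∃ N : ℕ, ∀ n ≥ N,
        ({s : ℝ | FYn n t ≤ FZn n s}).Nonempty ∧ BddBelow {s : ℝ | FYn n t ≤ FZn n s}) ∧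
      Tendsto (fun n => gn n t) atTop (nhds (g0 t))) ∧
    (Continuous FY0 →
      ∀ K : Set ℝ, IsCompact K → K ⊆ Ytil →
        ∀ ε > (0 : ℝ), ∃ N : ℕ, ∀ n ≥ N, ∀ t ∈ K, |gn n t - g0 t| < ε) := by
  obtain rfl : gn = fun n t => generalizedInverse (FZn n) (FYn n t) := funext₂ hgn
  obtain ⟨hpointwise, hlocUniform⟩ := transformation_consistency_general hFYn_mono hFY_conv
    hFZn_mono hFZ0_mono hFZ_conv hg0
  refine ⟨fun t ht => (hpointwise t ht).imp_left eventually_atTop.1,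
    fun hFY0_cont K hK hKY ε hε => eventually_atTop.1 ?_⟩
  have huniform := (tendstoLocallyUniformlyOn_iff_tendstoUniformlyOn_of_compact hK).1
    ((hlocUniform fun _ _ => hFY0_cont.continuousAt).mono hKY)
  simpa only [Real.dist_eq, abs_sub_comm] using Metric.tendstoUniformlyOn_iff.1 huniform ε hε
end
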